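/- For every d ≥ 1 and every real s with −2 < s < d and s ≠ 0, the s-energy of the uniform measure on S^d is given by ∫_{S^d} ∫_{S^d} |x − y|^{−s} dσ_d(x) dσ_d(y) = 2^{d−s−1} · Γ((d+1)/2) · Γ((d−s)/2) / ( √π · Γ(d − s/2) ). -/

import Mathlib

open MeasureTheory Metric Real Filter
open scoped BigOperators ENNReal NNReal RealInnerProductSpace Topology

noncomputable section

/-- Normalized uniform (surface) probability measure `σ_d` on the unit sphere
`S^d ⊂ ℝ^{d+1}`, defined as normalized `d`-dimensional Hausdorff measure. -/
def sigmaMeasure (d : ℕ) : Measure (EuclideanSpace ℝ (Fin (d + 1))) :=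
  (μH[(d : ℝ)] (sphere (0 : EuclideanSpace ℝ (Fin (d + 1))) 1))⁻¹ •
    μH[(d : ℝ)].restrict (sphere (0 : EuclideanSpace ℝ (Fin (d + 1))) 1)

/-- Squared spherical cap `L²` discrepancy of the `N`-point configuration `x` on `S^d`:
`∫_{-1}^{1} ∫_{S^d} |#{k : x_k ∈ C(y;t)}/N − σ_d(C(y;t))|² dσ_d(y) dt`. -/
def L2DiscSq (d N : ℕ) (x : Fin N → EuclideanSpace ℝ (Fin (d + 1))) : ℝ :=
  ∫ t in Set.Icc (-1 : ℝ) 1, ∫ y,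
    ((Nat.card {k : Fin N // t ≤ ⟪y, x k⟫} : ℝ) / N
      - (sigmaMeasure d {z | t ≤ ⟪y, z⟫}).toReal) ^ 2 ∂ sigmaMeasure d

/-- Spherical cap `L²` discrepancy. -/
def L2Disc (d N : ℕ) (x : Fin N → EuclideanSpace ℝ (Fin (d + 1))) : ℝ :=
  Real.sqrt (L2DiscSq d N x)

/-!
On the forward light cone `{(‖y‖, y)}` the measure `dy / ‖y‖` is Lorentz invariant. For a unit
vector `e` it equals `du dz / u` in the coordinates `u = ‖y‖ - ⟪e, y⟫` and `z`, the projection of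
`y` to `e^⊥`, in which `2‖y‖ = u + ‖z‖² / u`. Integrating `(‖y‖ - ⟪e, y⟫)^(-a) * exp(-2‖y‖)`
against it is therefore a Gaussian integral in `z` followed by a Gamma integral in `u`, whose
value is independent of `e`. Averaging over `e` on the sphere and writing `y = r • x` with
`‖x‖ = 1`, the same quantity is a Gamma integral in `r` times the average of `(1 - ⟪e, x⟫)^(-a)`
over `e`. Since `|x - y|² = 2(1 - ⟪x, y⟫)` on the sphere, `a = s / 2` gives the energy.
-/

open Module Submodule Set

section Lintegral

variable {α : Type*} [MeasurableSpace α] {μ : Measure α}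

lemma lintegral_ofReal_of_integral_pos {f : α → ℝ} (hf : 0 ≤ᵐ[μ] f) (hpos : 0 < ∫ x, f x ∂μ) :
    ∫⁻ x, ENNReal.ofReal (f x) ∂μ = ENNReal.ofReal (∫ x, f x ∂μ) :=
  (ofReal_integral_eq_lintegral_ofReal (Integrable.of_integral_ne_zero hpos.ne') hf).symm

lemma lintegral_rpow_mul_exp_neg_mul_Ioi {a r : ℝ} (ha : 0 < a) (hr : 0 < r) :
    ∫⁻ t in Ioi (0 : ℝ), ENNReal.ofReal (t ^ (a - 1) * exp (-(r * t))) =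
      ENNReal.ofReal ((1 / r) ^ a * Gamma a) := by
  have hint := integral_rpow_mul_exp_neg_mul_Ioi ha hr
  rw [lintegral_ofReal_of_integral_pos _ (by rw [hint]; positivity), hint]
  filter_upwards [ae_restrict_mem measurableSet_Ioi] with t (ht : 0 < t)
  exact (mul_pos (rpow_pos_of_pos ht _) (exp_pos _)).le

variable {V : Type*} [NormedAddCommGroup V] [InnerProductSpace ℝ V] [FiniteDimensional ℝ V]
  [MeasurableSpace V] [BorelSpace V]

lemma lintegral_rexp_neg_mul_sq_norm {b : ℝ} (hb : 0 < b) :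
    ∫⁻ v : V, ENNReal.ofReal (exp (-b * ‖v‖ ^ 2)) =
      ENNReal.ofReal ((π / b) ^ (finrank ℝ V / 2 : ℝ)) := by
  have hint := GaussianFourier.integral_rexp_neg_mul_sq_norm (V := V) hb
  rw [lintegral_ofReal_of_integral_pos (.of_forall fun _ ↦ (exp_pos _).le)
    (by rw [hint]; positivity), hint]

lemma integral_norm_rpow_mul_exp_neg_mul_norm [Nontrivial V] {p c : ℝ}
    (hp : 0 < finrank ℝ V + p) (hc : 0 < c) :
    ∫ v : V, ‖v‖ ^ p * exp (-(c * ‖v‖)) =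
      2 * π ^ (finrank ℝ V / 2 : ℝ) / Gamma (finrank ℝ V / 2) *
        ((1 / c) ^ (finrank ℝ V + p) * Gamma (finrank ℝ V + p)) := by
  have hn : (0 : ℝ) < finrank ℝ V := mod_cast finrank_pos
  have hradial : ∫ r in Ioi (0 : ℝ), r ^ (finrank ℝ V - 1) • (r ^ p * exp (-(c * r))) =
      (1 / c) ^ (finrank ℝ V + p) * Gamma (finrank ℝ V + p) := by
    rw [← integral_rpow_mul_exp_neg_mul_Ioi hp hc]
    refine setIntegral_congr_fun measurableSet_Ioi fun r (hr : 0 < r) ↦ ?_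
    rw [smul_eq_mul, ← mul_assoc, ← rpow_natCast, ← rpow_add hr, Nat.cast_pred finrank_pos]
    ring_nf
  have hball : volume.real (ball (0 : V) 1) =
      π ^ (finrank ℝ V / 2 : ℝ) / (finrank ℝ V / 2 * Gamma (finrank ℝ V / 2)) := by
    have hsqrt : √π ^ finrank ℝ V = π ^ (finrank ℝ V / 2 : ℝ) := by
      rw [sqrt_eq_rpow, ← rpow_mul_natCast pi_pos.le, one_div_mul_eq_div]
    rw [measureReal_def, InnerProductSpace.volume_ball, hsqrt,
      Gamma_add_one (by positivity), ENNReal.ofReal_one, one_pow, one_mul,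
      ENNReal.toReal_ofReal (by positivity)]
  rw [integral_fun_norm_addHaar volume (f := fun r : ℝ ↦ r ^ p * exp (-(c * r))), hradial, hball,
    nsmul_eq_mul, smul_eq_mul]
  field_simp

lemma lintegral_norm_rpow_mul_exp_neg_mul_norm [Nontrivial V] {p c : ℝ}
    (hp : 0 < finrank ℝ V + p) (hc : 0 < c) :
    ∫⁻ v : V, ENNReal.ofReal (‖v‖ ^ p * exp (-(c * ‖v‖))) =
      ENNReal.ofReal (2 * π ^ (finrank ℝ V / 2 : ℝ) / Gamma (finrank ℝ V / 2) *
        ((1 / c) ^ (finrank ℝ V + p) * Gamma (finrank ℝ V + p))) := by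
  have hint := integral_norm_rpow_mul_exp_neg_mul_norm hp hc
  have hn : (0 : ℝ) < finrank ℝ V := mod_cast finrank_pos
  rw [lintegral_ofReal_of_integral_pos (.of_forall fun v ↦ by positivity)
    (by rw [hint]; positivity), hint]

end Lintegral

section LightCone

/-- The height `t` of the point of the light cone `r = √(t² + ρ²)` at distance `ρ` from the axis
whose null coordinate `r - t` is `u`. -/
def lightConeHeight (ρ u : ℝ) : ℝ := (ρ ^ 2 / u - u) / 2

lemma sqrt_lightConeHeight_sq_add_sq (ρ : ℝ) {u : ℝ} (hu : 0 < u) :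
    √(lightConeHeight ρ u ^ 2 + ρ ^ 2) = (ρ ^ 2 / u + u) / 2 := by
  rw [sqrt_eq_iff_mul_self_eq (by positivity) (by positivity), lightConeHeight]
  field_simp
  ring

lemma sqrt_lightConeHeight_sq_add_sq_sub (ρ : ℝ) {u : ℝ} (hu : 0 < u) :
    √(lightConeHeight ρ u ^ 2 + ρ ^ 2) - lightConeHeight ρ u = u := by
  rw [sqrt_lightConeHeight_sq_add_sq ρ hu, lightConeHeight]
  ring

lemma injOn_lightConeHeight (ρ : ℝ) : InjOn (lightConeHeight ρ) (Ioi 0) := fun u hu v hv h ↦ by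
  rw [← sqrt_lightConeHeight_sq_add_sq_sub ρ hu, h, sqrt_lightConeHeight_sq_add_sq_sub ρ hv]

lemma image_lightConeHeight_Ioi (ρ : ℝ) :
    lightConeHeight ρ '' Ioi 0 = {t | t < √(t ^ 2 + ρ ^ 2)} := by
  ext t
  constructor
  · rintro ⟨u, hu : 0 < u, rfl⟩
    rw [mem_ofPred_eq, ← sub_pos, sqrt_lightConeHeight_sq_add_sq_sub ρ hu]
    exact hu
  · intro ht
    have hu : 0 < √(t ^ 2 + ρ ^ 2) - t := sub_pos.2 ht
    have hsq : √(t ^ 2 + ρ ^ 2) ^ 2 = t ^ 2 + ρ ^ 2 := sq_sqrt (by positivity)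
    refine ⟨_, hu, ?_⟩
    rw [lightConeHeight]
    field_simp
    linear_combination -hsq

lemma hasDerivAt_lightConeHeight (ρ : ℝ) {u : ℝ} (hu : u ≠ 0) :
    HasDerivAt (lightConeHeight ρ) (-((ρ ^ 2 / u + u) / 2 * u⁻¹)) u := by
  have hder := (((hasDerivAt_inv hu).const_mul (ρ ^ 2)).sub (hasDerivAt_id u)).div_const 2
  refine hder.congr_deriv ?_
  field_simp
  ring

lemma setLIntegral_lt_sqrt_sq_add_sq (ρ : ℝ) (G : ℝ → ℝ → ℝ≥0∞) :
    ∫⁻ t in {t | t < √(t ^ 2 + ρ ^ 2)},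
        ENNReal.ofReal (√(t ^ 2 + ρ ^ 2))⁻¹ * G (√(t ^ 2 + ρ ^ 2) - t) √(t ^ 2 + ρ ^ 2) =
      ∫⁻ u in Ioi 0, ENNReal.ofReal u⁻¹ * G u ((ρ ^ 2 / u + u) / 2) := by
  rw [← image_lightConeHeight_Ioi, lintegral_image_eq_lintegral_abs_deriv_mul measurableSet_Ioi
    (fun u hu ↦ (hasDerivAt_lightConeHeight ρ (ne_of_gt hu)).hasDerivWithinAt)
    (injOn_lightConeHeight ρ)]
  refine setLIntegral_congr_fun measurableSet_Ioi fun u (hu : 0 < u) ↦ ?_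
  have hr : 0 < (ρ ^ 2 / u + u) / 2 := by positivity
  rw [sqrt_lightConeHeight_sq_add_sq_sub ρ hu, sqrt_lightConeHeight_sq_add_sq ρ hu, ← mul_assoc,
    abs_neg, abs_of_pos (by positivity), ← ENNReal.ofReal_mul (by positivity),
    mul_right_comm, mul_inv_cancel₀ hr.ne', one_mul]

lemma lintegral_rpow_mul_exp_sq_norm_div_add {V : Type*} [NormedAddCommGroup V]
    [InnerProductSpace ℝ V] [FiniteDimensional ℝ V] [MeasurableSpace V] [BorelSpace V] (a : ℝ)
    {u : ℝ} (hu : 0 < u) :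
    ∫⁻ z : V, ENNReal.ofReal u⁻¹ *
        ENNReal.ofReal (u ^ (-a) * exp (-(2 * ((‖z‖ ^ 2 / u + u) / 2)))) =
      ENNReal.ofReal (π ^ (finrank ℝ V / 2 : ℝ)) *
        ENNReal.ofReal (u ^ (finrank ℝ V / 2 - a - 1) * exp (-(1 * u))) := by
  have hsplit (z : V) : ENNReal.ofReal u⁻¹ *
      ENNReal.ofReal (u ^ (-a) * exp (-(2 * ((‖z‖ ^ 2 / u + u) / 2)))) =
      ENNReal.ofReal (u⁻¹ * u ^ (-a) * exp (-u)) * ENNReal.ofReal (exp (-u⁻¹ * ‖z‖ ^ 2)) := by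
    have hexp : exp (-(2 * ((‖z‖ ^ 2 / u + u) / 2))) = exp (-u) * exp (-u⁻¹ * ‖z‖ ^ 2) := by
      rw [← exp_add]
      ring_nf
    rw [← ENNReal.ofReal_mul (by positivity), ← ENNReal.ofReal_mul (by positivity), hexp]
    ring_nf
  have hpow : u ^ (finrank ℝ V / 2 - a - 1) = u⁻¹ * u ^ (-a) * u ^ (finrank ℝ V / 2 : ℝ) := by
    rw [← rpow_neg_one, ← rpow_add hu, ← rpow_add hu]
    ring_nf
  simp only [hsplit]
  rw [lintegral_const_mul _ (by fun_prop), lintegral_rexp_neg_mul_sq_norm (inv_pos.2 hu), hpow,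
    ← ENNReal.ofReal_mul (by positivity), ← ENNReal.ofReal_mul (by positivity), div_inv_eq_mul,
    mul_rpow pi_pos.le hu.le, one_mul]
  ring_nf

variable {E : Type*} [NormedAddCommGroup E] [InnerProductSpace ℝ E] {e : E}

lemma inner_smul_add_orthogonal (he : ‖e‖ = 1) (t : ℝ) (z : (ℝ ∙ e)ᗮ) :
    ⟪e, t • e + (z : E)⟫ = t := by
  rw [inner_add_right, mem_orthogonal_singleton_iff_inner_right.1 z.2, real_inner_smul_right,
    real_inner_self_eq_norm_sq, he, one_pow, mul_one, add_zero]

lemma norm_smul_add_orthogonal (he : ‖e‖ = 1) (t : ℝ) (z : (ℝ ∙ e)ᗮ) :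
    ‖t • e + (z : E)‖ = √(t ^ 2 + ‖z‖ ^ 2) := by
  have hz : ⟪t • e, (z : E)⟫ = 0 := by
    rw [real_inner_smul_left, mem_orthogonal_singleton_iff_inner_right.1 z.2, mul_zero]
  rw [eq_comm, sqrt_eq_iff_mul_self_eq (by positivity) (by positivity),
    norm_add_sq_eq_norm_sq_add_norm_sq_of_inner_eq_zero _ _ hz, norm_smul, he, mul_one,
    Real.norm_eq_abs, abs_mul_abs_self, coe_norm, sq, sq]

variable [FiniteDimensional ℝ E] [MeasurableSpace E] [BorelSpace E]

lemma measurePreserving_smul_add_orthogonal (he : ‖e‖ = 1) :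
    MeasurePreserving fun p : ℝ × (ℝ ∙ e)ᗮ ↦ p.1 • e + p.2 := by
  have hline := (LinearIsometryEquiv.toSpanUnitSingleton (𝕜 := ℝ) e he).measurePreserving
  exact (ℝ ∙ e).orthogonalDecomposition.symm.measurePreserving.comp
    ((WithLp.volume_preserving_toLp _ _).comp (hline.prod (.id _)))

lemma lintegral_inner_norm (he : ‖e‖ = 1) {F : ℝ → ℝ → ℝ≥0∞}
    (hF : Measurable (Function.uncurry F)) :
    ∫⁻ y : E, F ⟪e, y⟫ ‖y‖ = ∫⁻ z : (ℝ ∙ e)ᗮ, ∫⁻ t : ℝ, F t √(t ^ 2 + ‖z‖ ^ 2) := by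
  have hFm : Measurable fun y : E ↦ F ⟪e, y⟫ ‖y‖ :=
    hF.comp (f := fun y : E ↦ (⟪e, y⟫, ‖y‖)) (by fun_prop)
  have hmp := measurePreserving_smul_add_orthogonal he
  rw [← hmp.lintegral_comp hFm, Measure.volume_eq_prod,
    lintegral_prod_symm _ (by exact (hFm.comp hmp.measurable).aemeasurable)]
  simp only [inner_smul_add_orthogonal he, norm_smul_add_orthogonal he]

lemma setLIntegral_inner_lt_norm (he : ‖e‖ = 1) {G : ℝ → ℝ → ℝ≥0∞}
    (hG : Measurable (Function.uncurry G)) :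
    ∫⁻ y in {y : E | ⟪e, y⟫ < ‖y‖}, ENNReal.ofReal ‖y‖⁻¹ * G (‖y‖ - ⟪e, y⟫) ‖y‖ =
      ∫⁻ u in Ioi 0, ∫⁻ z : (ℝ ∙ e)ᗮ, ENNReal.ofReal u⁻¹ * G u ((‖z‖ ^ 2 / u + u) / 2) := by
  let F (t r : ℝ) : ℝ≥0∞ :=
    {p : ℝ × ℝ | p.1 < p.2}.indicator (fun p ↦ ENNReal.ofReal p.2⁻¹ * G (p.2 - p.1) p.2) (t, r)
  have hF : Measurable (Function.uncurry F) :=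
    .indicator (.mul (by fun_prop) (hG.comp (f := fun p : ℝ × ℝ ↦ (p.2 - p.1, p.2)) (by fun_prop)))
      (measurableSet_lt measurable_fst measurable_snd)
  have hGm : Measurable fun p : ℝ × (ℝ ∙ e)ᗮ ↦
      ENNReal.ofReal p.1⁻¹ * G p.1 ((‖p.2‖ ^ 2 / p.1 + p.1) / 2) :=
    .mul (by fun_prop)
      (hG.comp (f := fun p : ℝ × (ℝ ∙ e)ᗮ ↦ (p.1, (‖p.2‖ ^ 2 / p.1 + p.1) / 2)) (by fun_prop))
  calc _ = ∫⁻ y : E, F ⟪e, y⟫ ‖y‖ := by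
        rw [← lintegral_indicator (measurableSet_lt (by fun_prop) (by fun_prop))]
        rfl
    _ = ∫⁻ z : (ℝ ∙ e)ᗮ, ∫⁻ t : ℝ, F t √(t ^ 2 + ‖z‖ ^ 2) := lintegral_inner_norm he hF
    _ = ∫⁻ z : (ℝ ∙ e)ᗮ, ∫⁻ u in Ioi 0,
          ENNReal.ofReal u⁻¹ * G u ((‖z‖ ^ 2 / u + u) / 2) := by
        refine lintegral_congr fun z ↦ ?_
        rw [← setLIntegral_lt_sqrt_sq_add_sq,
          ← lintegral_indicator (measurableSet_lt (by fun_prop) (by fun_prop))]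
        rfl
    _ = _ := (lintegral_lintegral_swap hGm.aemeasurable).symm

lemma ae_inner_lt_norm (hE : 1 < finrank ℝ E) (he : ‖e‖ = 1) : ∀ᵐ y : E, ⟪e, y⟫ < ‖y‖ := by
  have hline : (ℝ ∙ e) ≠ ⊤ := fun h ↦ by
    have := finrank_span_singleton (K := ℝ) (norm_ne_zero_iff.1 (he ▸ one_ne_zero))
    rw [h, finrank_top] at this
    lia
  filter_upwards [compl_mem_ae_iff.2 (Measure.addHaar_submodule volume (ℝ ∙ e) hline)] with y hy
  have hle := real_inner_le_norm e y
  rw [he, one_mul] at hle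
  refine hle.lt_of_ne fun h ↦ hy (mem_span_singleton.2 ⟨‖y‖, ?_⟩)
  simpa [he] using (inner_eq_norm_mul_iff_real (x := e) (y := y)).1 (by rw [h, he, one_mul])

variable {d : ℕ} [Fact (finrank ℝ E = d + 1)]

/-- The density on the forward light cone, written as a function of its spatial coordinate `y`,
whose average over unit vectors `e` is evaluated in two ways. The measure `dy / ‖y‖` is the
Lorentz-invariant one. -/
def coneDensity (a : ℝ) (e y : E) : ℝ :=
  ‖y‖⁻¹ * ((‖y‖ - ⟪e, y⟫) ^ (-a) * exp (-(2 * ‖y‖)))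

lemma setLIntegral_coneDensity {a : ℝ} (ha : a < d / 2) (he : ‖e‖ = 1) :
    ∫⁻ y in {y : E | ⟪e, y⟫ < ‖y‖}, ENNReal.ofReal (coneDensity a e y) =
      ENNReal.ofReal (π ^ (d / 2 : ℝ) * Gamma (d / 2 - a)) := by
  have hcone := setLIntegral_inner_lt_norm he
    (G := fun u r ↦ ENNReal.ofReal (u ^ (-a) * exp (-(2 * r)))) (by fun_prop)
  have hrank : finrank ℝ (ℝ ∙ e)ᗮ = d :=
    finrank_orthogonal_span_singleton (norm_ne_zero_iff.1 (he ▸ one_ne_zero))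
  simp_rw [coneDensity, ENNReal.ofReal_mul (inv_nonneg.2 (norm_nonneg _))]
  rw [hcone, setLIntegral_congr_fun measurableSet_Ioi
      fun u hu ↦ lintegral_rpow_mul_exp_sq_norm_div_add a hu,
    hrank, lintegral_const_mul _ (by fun_prop),
    lintegral_rpow_mul_exp_neg_mul_Ioi (sub_pos.2 ha) one_pos,
    ← ENNReal.ofReal_mul (by positivity), div_one, one_rpow, one_mul]

lemma lintegral_coneDensity {a : ℝ} (ha : a < d / 2) (he : ‖e‖ = 1) :
    ∫⁻ y : E, ENNReal.ofReal (coneDensity a e y) =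
      ENNReal.ofReal (π ^ (d / 2 : ℝ) * Gamma (d / 2 - a)) := by
  rw [← setLIntegral_coneDensity ha he]
  rcases eq_or_ne a 0 with rfl | ha0
  · have hd : 0 < d := by
      rw [← Nat.cast_pos (α := ℝ)]
      linarith
    have hmem : ∀ᵐ y : E, y ∈ {y | ⟪e, y⟫ < ‖y‖} :=
      ae_inner_lt_norm ((Fact.out : finrank ℝ E = d + 1) ▸ Nat.lt_add_of_pos_left hd) he
    rw [Measure.restrict_eq_self_of_ae_mem hmem]
  · refine (setLIntegral_eq_of_support_subset fun y hy ↦ ?_).symm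
    have hle := real_inner_le_norm e y
    rw [he, one_mul] at hle
    refine hle.lt_of_ne fun h ↦ hy ?_
    simp [coneDensity, h, zero_rpow (neg_ne_zero.2 ha0)]

end LightCone

section UniformMeasure

variable {E : Type*} [NormedAddCommGroup E] [InnerProductSpace ℝ E] [MeasurableSpace E]

/-- The uniform probability measure on the unit sphere of `E`, regarded as a measure on `E` and
characterized by its invariance under linear isometries. -/
class IsUniformOnSphere (σ : Measure E) : Prop extends IsProbabilityMeasure σ where
  ae_norm_eq_one : ∀ᵐ x ∂σ, ‖x‖ = 1
  measurePreserving (L : E ≃ₗᵢ[ℝ] E) : MeasurePreserving L σ σ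

variable (σ : Measure E) [IsUniformOnSphere σ] [FiniteDimensional ℝ E] [BorelSpace E]

namespace IsUniformOnSphere

lemma lintegral_comp_inner_eq_of_norm_eq {f : ℝ → ℝ≥0∞} (hf : Measurable f) {e e' : E}
    (h : ‖e‖ = ‖e'‖) : ∫⁻ x, f ⟪x, e⟫ ∂σ = ∫⁻ x, f ⟪x, e'⟫ ∂σ := by
  let L := (ℝ ∙ (e - e'))ᗮ.reflection
  have hL : L e = e' := reflection_sub h
  have hmeas : Measurable fun x : E ↦ f ⟪x, e'⟫ := hf.comp (by fun_prop)
  rw [← (measurePreserving (σ := σ) L).lintegral_comp hmeas]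
  simp only [← hL, L.inner_map_map]

lemma lintegral_prod_comp_inner {f : ℝ → ℝ≥0∞} (hf : Measurable f) {e : E} (he : ‖e‖ = 1) :
    ∫⁻ p : E × E, f ⟪p.1, p.2⟫ ∂σ.prod σ = ∫⁻ x, f ⟪x, e⟫ ∂σ := by
  have hmeas : Measurable fun p : E × E ↦ f ⟪p.1, p.2⟫ := hf.comp (by fun_prop)
  have hinner : ∀ᵐ y ∂σ, ∫⁻ x, f ⟪x, y⟫ ∂σ = ∫⁻ x, f ⟪x, e⟫ ∂σ := by
    filter_upwards [ae_norm_eq_one (σ := σ)] with y hy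
    exact lintegral_comp_inner_eq_of_norm_eq σ hf (hy.trans he.symm)
  rw [lintegral_prod_symm _ hmeas.aemeasurable, lintegral_congr_ae hinner, lintegral_const,
    measure_univ, mul_one]

end IsUniformOnSphere

end UniformMeasure

section ZonalIntegral

variable {E : Type*} [NormedAddCommGroup E] [InnerProductSpace ℝ E]

lemma coneDensity_eq_mul (a : ℝ) {x y : E} (hx : ‖x‖ = 1) (hy : y ≠ 0) :
    coneDensity a x y =
      ‖y‖ ^ (-a - 1) * exp (-(2 * ‖y‖)) * (1 - ⟪x, ‖y‖⁻¹ • y⟫) ^ (-a) := by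
  have hy' : 0 < ‖y‖ := norm_pos_iff.2 hy
  have hle : ⟪x, ‖y‖⁻¹ • y⟫ ≤ 1 := by
    simpa [hx, norm_smul, hy'.ne'] using real_inner_le_norm x (‖y‖⁻¹ • y)
  have hfactor : ‖y‖ - ⟪x, y⟫ = ‖y‖ * (1 - ⟪x, ‖y‖⁻¹ • y⟫) := by
    rw [real_inner_smul_right]
    field_simp
  rw [coneDensity, hfactor, mul_rpow hy'.le (sub_nonneg.2 hle), rpow_sub_one hy'.ne']
  ring

variable [MeasurableSpace E] [FiniteDimensional ℝ E] [BorelSpace E]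

lemma measurable_coneDensity (a : ℝ) :
    Measurable (Function.uncurry (coneDensity a : E → E → ℝ)) := by
  simp only [Function.uncurry_def, coneDensity]
  fun_prop

variable (σ : Measure E) [IsUniformOnSphere σ] {d : ℕ} [Fact (finrank ℝ E = d + 1)]

lemma lintegral_coneDensity_left (a : ℝ) {e y : E} (he : ‖e‖ = 1) (hy : y ≠ 0) :
    ∫⁻ x, ENNReal.ofReal (coneDensity a x y) ∂σ =
      ENNReal.ofReal (‖y‖ ^ (-a - 1) * exp (-(2 * ‖y‖))) *
        ∫⁻ x, ENNReal.ofReal ((1 - ⟪x, e⟫) ^ (-a)) ∂σ := by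
  have hunit : ‖e‖ = ‖‖y‖⁻¹ • y‖ := by
    rw [he, norm_smul, norm_inv, norm_norm, inv_mul_cancel₀ (norm_ne_zero_iff.2 hy)]
  rw [IsUniformOnSphere.lintegral_comp_inner_eq_of_norm_eq σ
      (f := fun t ↦ ENNReal.ofReal ((1 - t) ^ (-a))) (by fun_prop) hunit,
    ← lintegral_const_mul _ (by fun_prop)]
  refine lintegral_congr_ae ?_
  filter_upwards [IsUniformOnSphere.ae_norm_eq_one (σ := σ)] with x hx
  rw [coneDensity_eq_mul a hx hy, ENNReal.ofReal_mul (by positivity)]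

lemma lintegral_radial_mul_lintegral_one_sub_inner {a : ℝ} (ha : a < d / 2) {e : E}
    (he : ‖e‖ = 1) :
    (∫⁻ y : E, ENNReal.ofReal (‖y‖ ^ (-a - 1) * exp (-(2 * ‖y‖)))) *
        ∫⁻ x, ENNReal.ofReal ((1 - ⟪x, e⟫) ^ (-a)) ∂σ =
      ENNReal.ofReal (π ^ (d / 2 : ℝ) * Gamma (d / 2 - a)) := by
  have : Nontrivial E := ⟨e, 0, norm_ne_zero_iff.1 (he ▸ one_ne_zero)⟩
  have hmeas := (measurable_coneDensity (E := E) a).ennreal_ofReal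
  calc _ = ∫⁻ y, ∫⁻ x, ENNReal.ofReal (coneDensity a x y) ∂σ := by
        rw [← lintegral_mul_const _ (by fun_prop)]
        refine lintegral_congr_ae ?_
        filter_upwards [compl_mem_ae_iff.2 (measure_singleton (0 : E))] with y hy
        exact (lintegral_coneDensity_left σ a he hy).symm
    _ = ∫⁻ x, (∫⁻ y, ENNReal.ofReal (coneDensity a x y)) ∂σ :=
        (lintegral_lintegral_swap hmeas.aemeasurable).symm
    _ = ∫⁻ _, ENNReal.ofReal (π ^ (d / 2 : ℝ) * Gamma (d / 2 - a)) ∂σ := by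
        refine lintegral_congr_ae ?_
        filter_upwards [IsUniformOnSphere.ae_norm_eq_one (σ := σ)] with x hx
        exact lintegral_coneDensity ha hx
    _ = _ := by rw [lintegral_const, measure_univ, mul_one]

theorem lintegral_one_sub_inner_rpow_neg {a : ℝ} (ha : a < d / 2) {e : E} (he : ‖e‖ = 1) :
    ∫⁻ x, ENNReal.ofReal ((1 - ⟪x, e⟫) ^ (-a)) ∂σ =
      ENNReal.ofReal (2 ^ (d - a - 1) * Gamma ((d + 1) / 2) * Gamma (d / 2 - a) /
        (√π * Gamma (d - a))) := by
  have : Nontrivial E := ⟨e, 0, norm_ne_zero_iff.1 (he ▸ one_ne_zero)⟩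
  have hda : 0 < d - a := by linarith [Nat.cast_nonneg (α := ℝ) d]
  have hrank : (finrank ℝ E : ℝ) = d + 1 := mod_cast (Fact.out : finrank ℝ E = d + 1)
  have hexp : (finrank ℝ E : ℝ) + (-a - 1) = d - a := by
    rw [hrank]
    ring
  have hpi : π ^ ((d + 1) / 2 : ℝ) = π ^ (d / 2 : ℝ) * √π := by
    rw [sqrt_eq_rpow, ← rpow_add pi_pos]
    ring_nf
  have hmul := lintegral_radial_mul_lintegral_one_sub_inner σ ha he
  rw [lintegral_norm_rpow_mul_exp_neg_mul_norm (hexp ▸ hda) two_pos, hexp, hrank] at hmul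
  rw [(ENNReal.eq_div_iff (by positivity) ENNReal.ofReal_ne_top).2 hmul,
    ← ENNReal.ofReal_div_of_pos (by positivity), hpi, one_div, inv_rpow zero_le_two,
    rpow_sub_one two_ne_zero]
  congr 1
  field_simp

end ZonalIntegral

section Energy

variable {E : Type*} [NormedAddCommGroup E] [InnerProductSpace ℝ E]

lemma dist_rpow_neg_of_norm_eq_one (s : ℝ) {x y : E} (hx : ‖x‖ = 1) (hy : ‖y‖ = 1) :
    dist x y ^ (-s) = 2 ^ (-(s / 2)) * (1 - ⟪x, y⟫) ^ (-(s / 2)) := by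
  have hle : ⟪x, y⟫ ≤ 1 := by simpa [hx, hy] using real_inner_le_norm x y
  have hsq : dist x y ^ 2 = 2 * (1 - ⟪x, y⟫) := by
    rw [dist_eq_norm, norm_sub_sq_real, hx, hy]
    ring
  rw [← mul_rpow zero_le_two (sub_nonneg.2 hle), ← hsq, ← rpow_natCast_mul dist_nonneg]
  push_cast
  ring_nf

theorem riesz_energy_integral_sphere_general [MeasurableSpace E] [FiniteDimensional ℝ E]
    [BorelSpace E] (σ : Measure E) [IsUniformOnSphere σ] {d : ℕ} [Fact (finrank ℝ E = d + 1)]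
    {s : ℝ} (hs : s < d) :
    ∫ p : E × E, dist p.1 p.2 ^ (-s) ∂σ.prod σ =
      2 ^ ((d : ℝ) - s - 1) * Gamma (((d : ℝ) + 1) / 2) * Gamma (((d : ℝ) - s) / 2) /
        (√π * Gamma ((d : ℝ) - s / 2)) := by
  have : Nontrivial E := nontrivial_of_finrank_pos (R := ℝ)
    ((Fact.out : finrank ℝ E = d + 1) ▸ d.succ_pos)
  obtain ⟨e, he⟩ := exists_norm_eq E zero_le_one
  have hae : ∀ᵐ p ∂σ.prod σ, ENNReal.ofReal (dist p.1 p.2 ^ (-s)) =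
      ENNReal.ofReal (2 ^ (-(s / 2)) * (1 - ⟪p.1, p.2⟫) ^ (-(s / 2))) := by
    have hunit := IsUniformOnSphere.ae_norm_eq_one (σ := σ)
    filter_upwards [Measure.quasiMeasurePreserving_fst.ae hunit,
      Measure.quasiMeasurePreserving_snd.ae hunit] with p hp₁ hp₂
    rw [dist_rpow_neg_of_norm_eq_one s hp₁ hp₂]
  have hzonal := lintegral_one_sub_inner_rpow_neg σ (div_lt_div_of_pos_right hs two_pos) he
  have hds : 0 < d - s := sub_pos.2 hs
  have hds' : 0 < d - s / 2 := by linarith [hds, Nat.cast_nonneg (α := ℝ) d]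
  have htwo : (2 : ℝ) ^ (d - s - 1) = 2 ^ (-(s / 2)) * 2 ^ (d - s / 2 - 1) := by
    rw [← rpow_add two_pos]
    ring_nf
  rw [integral_eq_lintegral_of_nonneg_ae (.of_forall fun p ↦ by positivity)
      (Measurable.aestronglyMeasurable (by fun_prop)),
    lintegral_congr_ae hae,
    IsUniformOnSphere.lintegral_prod_comp_inner σ
      (f := fun t ↦ ENNReal.ofReal (2 ^ (-(s / 2)) * (1 - t) ^ (-(s / 2)))) (by fun_prop) he]
  simp_rw [ENNReal.ofReal_mul (show (0 : ℝ) ≤ 2 ^ (-(s / 2)) by positivity)]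
  rw [lintegral_const_mul _ (by fun_prop), hzonal, ← sub_div, ← ENNReal.ofReal_mul (by positivity),
    ENNReal.toReal_ofReal (by positivity), htwo]
  ring

end Energy

section HausdorffSphere

variable {E : Type*} [NormedAddCommGroup E] [InnerProductSpace ℝ E]

lemma ball_subset_image_orthogonalProjectionOnto_sphere {v : E} (hv : ‖v‖ = 1) :
    ball 0 1 ⊆ (ℝ ∙ v)ᗮ.orthogonalProjectionOnto '' sphere (0 : E) 1 := fun z hz ↦ by
  rw [mem_ball_zero_iff] at hz
  have hsq : ‖z‖ ^ 2 ≤ 1 := pow_le_one₀ (norm_nonneg z) hz.le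
  refine ⟨√(1 - ‖z‖ ^ 2) • v + z, ?_, ?_⟩
  · rw [mem_sphere_zero_iff_norm, norm_smul_add_orthogonal hv, sq_sqrt (sub_nonneg.2 hsq),
      sub_add_cancel, sqrt_one]
  · rw [map_add, map_smul, orthogonalProjectionOnto_orthogonalComplement_singleton_eq_zero,
      smul_zero, zero_add, orthogonalProjectionOnto_mem_subspace_eq_self]

lemma hemisphere_subset_image_stereoInvFunAux {v : E} (hv : ‖v‖ = 1) :
    {x ∈ sphere (0 : E) 1 | ⟪v, x⟫ ≤ 0} ⊆
      (fun w : (ℝ ∙ v)ᗮ ↦ stereoInvFunAux v w) '' closedBall 0 2 := by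
  rintro x ⟨hx, hvx⟩
  have hne : x ≠ v := by
    rintro rfl
    rw [real_inner_self_eq_norm_sq, hv] at hvx
    linarith
  refine ⟨stereoToFun v x, ?_, congrArg Subtype.val (stereo_left_inv hv (x := ⟨x, hx⟩) hne)⟩
  have hproj : ‖(ℝ ∙ v)ᗮ.orthogonalProjectionOnto x‖ ≤ 1 :=
    (norm_orthogonalProjectionOnto_apply_le _ x).trans_eq (mem_sphere_zero_iff_norm.1 hx)
  have hscale : 2 / (1 - ⟪v, x⟫) ≤ 2 := div_le_self zero_le_two (by linarith)
  have hscale_nonneg : 0 ≤ 2 / (1 - ⟪v, x⟫) := div_nonneg zero_le_two (by linarith)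
  rw [mem_closedBall_zero_iff, stereoToFun_apply, norm_smul, innerSL_apply_apply,
    norm_of_nonneg hscale_nonneg]
  exact (mul_le_mul hscale hproj (norm_nonneg _) zero_le_two).trans_eq (mul_one 2)

variable [MeasurableSpace E] [FiniteDimensional ℝ E] [BorelSpace E] {d : ℕ}
  [Fact (finrank ℝ E = d + 1)]

lemma isAddHaarMeasure_hausdorffMeasure_orthogonal {v : E} (hv : ‖v‖ = 1) :
    (μH[d] : Measure (ℝ ∙ v)ᗮ).IsAddHaarMeasure := by
  have hrank : finrank ℝ (ℝ ∙ v)ᗮ = d :=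
    finrank_orthogonal_span_singleton (norm_ne_zero_iff.1 (hv ▸ one_ne_zero))
  rw [← hrank]
  infer_instance

variable (E d) in
lemma hausdorffMeasure_sphere_pos : 0 < μH[d] (sphere (0 : E) 1) := by
  have : Nontrivial E := nontrivial_of_finrank_pos (R := ℝ)
    ((Fact.out : finrank ℝ E = d + 1) ▸ d.succ_pos)
  obtain ⟨v, hv⟩ := exists_norm_eq E zero_le_one
  have hHaar := isAddHaarMeasure_hausdorffMeasure_orthogonal (d := d) hv
  calc 0 < μH[d] (ball (0 : (ℝ ∙ v)ᗮ) 1) := measure_ball_pos _ _ one_pos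
    _ ≤ μH[d] ((ℝ ∙ v)ᗮ.orthogonalProjectionOnto '' sphere (0 : E) 1) :=
        measure_mono (ball_subset_image_orthogonalProjectionOnto_sphere hv)
    _ ≤ (1 : ℝ≥0) ^ (d : ℝ) * μH[d] (sphere (0 : E) 1) :=
        (lipschitzWith_orthogonalProjectionOnto _).hausdorffMeasure_image_le d.cast_nonneg _
    _ = μH[d] (sphere (0 : E) 1) := by rw [ENNReal.coe_one, ENNReal.one_rpow, one_mul]

lemma hausdorffMeasure_hemisphere_lt_top {v : E} (hv : ‖v‖ = 1) :
    μH[d] {x ∈ sphere (0 : E) 1 | ⟪v, x⟫ ≤ 0} < ∞ := by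
  have hHaar := isAddHaarMeasure_hausdorffMeasure_orthogonal (d := d) hv
  have hsmooth : ContDiff ℝ 1 fun w : (ℝ ∙ v)ᗮ ↦ stereoInvFunAux v w :=
    contDiff_stereoInvFunAux.comp (ℝ ∙ v)ᗮ.subtypeL.contDiff
  obtain ⟨K, hK⟩ := hsmooth.contDiffOn.exists_lipschitzOnWith one_ne_zero
    (convex_closedBall 0 2) (isCompact_closedBall 0 2)
  calc μH[d] {x ∈ sphere (0 : E) 1 | ⟪v, x⟫ ≤ 0}
      ≤ μH[d] ((fun w : (ℝ ∙ v)ᗮ ↦ stereoInvFunAux v w) '' closedBall 0 2) :=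
        measure_mono (hemisphere_subset_image_stereoInvFunAux hv)
    _ ≤ K ^ (d : ℝ) * μH[d] (closedBall (0 : (ℝ ∙ v)ᗮ) 2) :=
        hK.hausdorffMeasure_image_le d.cast_nonneg
    _ < ∞ := ENNReal.mul_lt_top (ENNReal.rpow_lt_top_of_nonneg d.cast_nonneg ENNReal.coe_ne_top)
        measure_closedBall_lt_top

variable (E d) in
lemma hausdorffMeasure_sphere_lt_top : μH[d] (sphere (0 : E) 1) < ∞ := by
  have : Nontrivial E := nontrivial_of_finrank_pos (R := ℝ)
    ((Fact.out : finrank ℝ E = d + 1) ▸ d.succ_pos)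
  obtain ⟨v, hv⟩ := exists_norm_eq E zero_le_one
  have hcover : sphere (0 : E) 1 ⊆
      {x ∈ sphere (0 : E) 1 | ⟪v, x⟫ ≤ 0} ∪ {x ∈ sphere (0 : E) 1 | ⟪-v, x⟫ ≤ 0} := fun x hx ↦ by
    rcases le_total ⟪v, x⟫ 0 with h | h
    · exact .inl ⟨hx, h⟩
    · exact .inr ⟨hx, by rwa [inner_neg_left, neg_nonpos]⟩
  exact (measure_mono hcover).trans_lt (measure_union_lt_top
    (hausdorffMeasure_hemisphere_lt_top hv)
    (hausdorffMeasure_hemisphere_lt_top ((norm_neg v).trans hv)))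

variable (E d) in
theorem isUniformOnSphere_hausdorffMeasure :
    IsUniformOnSphere ((μH[d] (sphere (0 : E) 1))⁻¹ • μH[d].restrict (sphere (0 : E) 1)) where
  measure_univ := by
    rw [Measure.smul_apply, Measure.restrict_apply_univ, smul_eq_mul]
    exact ENNReal.inv_mul_cancel (hausdorffMeasure_sphere_pos E d).ne'
      (hausdorffMeasure_sphere_lt_top E d).ne
  ae_norm_eq_one := by
    refine Measure.ae_smul_measure ?_ _
    filter_upwards [ae_restrict_mem isClosed_sphere.measurableSet] with x hx
    exact mem_sphere_zero_iff_norm.1 hx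
  measurePreserving L := by
    have hL := (L.toIsometryEquiv.measurePreserving_hausdorffMeasure d).restrict_preimage
      (isClosed_sphere (x := 0) (ε := 1)).measurableSet
    rw [L.coe_toIsometryEquiv, L.preimage_sphere, map_zero] at hL
    exact hL.smul_measure _

end HausdorffSphere

/-- For `d ≥ 1` and `−2 < s < d`, `s ≠ 0`, the Riesz `s`-energy of the uniform measure
on `S^d` is `2^{d−s−1} Γ((d+1)/2) Γ((d−s)/2) / (√π Γ(d − s/2))`. -/
theorem riesz_energy_integral_sphere (d : ℕ) (hd : 1 ≤ d) (s : ℝ)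
    (hs₁ : -2 < s) (hs₂ : s < d) (hs₀ : s ≠ 0) :
    ∫ p : EuclideanSpace ℝ (Fin (d + 1)) × EuclideanSpace ℝ (Fin (d + 1)),
        dist p.1 p.2 ^ (-s) ∂ (sigmaMeasure d).prod (sigmaMeasure d)
      = 2 ^ ((d : ℝ) - s - 1) * Real.Gamma (((d : ℝ) + 1) / 2) * Real.Gamma (((d : ℝ) - s) / 2)
          / (Real.sqrt π * Real.Gamma ((d : ℝ) - s / 2)) := by
  have : Fact (finrank ℝ (EuclideanSpace ℝ (Fin (d + 1))) = d + 1) := ⟨finrank_euclideanSpace_fin⟩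
  have : IsUniformOnSphere (sigmaMeasure d) := isUniformOnSphere_hausdorffMeasure _ d
  exact riesz_energy_integral_sphere_general (sigmaMeasure d) hs₂
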